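/- arXiv:1511.02093 — 2 statements merged into one kernel-verified Lean document; each statement's English description precedes it below -/
import Mathlib

section
/- Let q be a power of a prime p, let k, f be positive integers with f | k, f > 1 and gcd(k/f, q−1) = 1, let a ∈ F_q^*, and let D = {x ∈ F_{q^k} : Tr_{q^f/q}(x^{(q^k−1)/(q^f−1)}) + a = 0}. Then for every b ∈ F_{q^k}^*, the Hamming weight w(c_b) = #{d ∈ D : Tr_{q^k/q}(b d) ≠ 0} satisfies w(c_b) ≥ ((q−1)q^{f+k−2} − (q^f − q)q^{(k+f)/2 − 2})/(q^f − 1), and this lower bound is strictly positive; in particular the code C_D has dimension k over F_q. -/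
open Finset Classical in
lemma aux_fiber {R V W : Type} [Field R] [AddCommGroup V] [AddCommGroup W] [Module R V] [Module R W]
    [Fintype V] [Fintype W] (L : V →ₗ[R] W) (hL : Function.Surjective L) (S : Finset W) :
    ((univ.filter (fun x => L x ∈ S)).card : ℝ) * Fintype.card W = S.card * Fintype.card V := by
  have key : ∀ w : W, (univ.filter (fun x => L x = w)).card
      = (univ.filter (fun x => L x = 0)).card := by
    intro w
    obtain ⟨v, rfl⟩ := hL w
    refine card_bij' (fun x _ => x - v) (fun x _ => x + v) ?_ ?_ ?_ ?_ <;> simp [sub_eq_zero]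
  have h1 : ∀ S : Finset W, (univ.filter (fun x => L x ∈ S)).card
      = S.card * (univ.filter (fun x => L x = 0)).card := by
    intro S
    rw [card_eq_sum_card_fiberwise (f := L) (t := S)]
    · rw [sum_congr rfl (g := fun _ => (univ.filter (fun x => L x = 0)).card)]
      · simp
      · intro w hw
        rw [← key w, filter_filter]
        congr 1
        ext x
        simp only [mem_filter, mem_univ, true_and]
        constructor
        · exact fun h => h.2
        · rintro rfl; exact ⟨hw, rfl⟩
    · intro x hx
      simpa using hx
  have h2 := h1 univ
  simp only [mem_univ, filter_true, card_univ] at h2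
  rw [h1 S, h2]
  push_cast
  ring

open Finset in
lemma aux_cs {ι : Type} (s : Finset ι) (A C : ι → ℝ) (Q h σ τ M : ℝ) (hQ : 0 < Q)
    (hs : (s.card : ℝ) = Q) (hA : ∑ y ∈ s, A y = h) (hA2 : ∑ y ∈ s, A y ^ 2 = h)
    (hC : ∑ y ∈ s, C y = σ) (hC2 : ∑ y ∈ s, C y ^ 2 ≤ τ) (hM : ∑ y ∈ s, A y * C y = M) :
    (M - h * σ / Q) ^ 2 ≤ (h - h ^ 2 / Q) * (τ - σ ^ 2 / Q) := by
  have cs := sum_mul_sq_le_sq_mul_sq s (fun y => A y - h / Q) (fun y => C y - σ / Q)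
  have e1 : ∑ y ∈ s, (A y - h / Q) * (C y - σ / Q) = M - h * σ / Q := by
    have : ∀ y ∈ s, (A y - h / Q) * (C y - σ / Q)
      = A y * C y - σ / Q * A y - h / Q * C y + h / Q * (σ / Q) := fun y _ => by ring
    rw [sum_congr rfl this, sum_add_distrib, sum_sub_distrib, sum_sub_distrib, ← mul_sum,
      ← mul_sum, hA, hC, hM, sum_const, nsmul_eq_mul, hs]
    field_simp; ring
  have e2 : ∀ (B : ι → ℝ) (g : ℝ), ∑ y ∈ s, B y = g →
      ∑ y ∈ s, (B y - g / Q) ^ 2 = ∑ y ∈ s, B y ^ 2 - g ^ 2 / Q := by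
    intro B g hB
    have : ∀ y ∈ s, (B y - g / Q) ^ 2 = B y ^ 2 - 2 * (g / Q) * B y + (g / Q) ^ 2 :=
      fun y _ => by ring
    rw [sum_congr rfl this, sum_add_distrib, sum_sub_distrib, ← mul_sum, hB, sum_const,
      nsmul_eq_mul, hs]
    field_simp; ring
  rw [e1] at cs
  have e3 := e2 A h hA
  have e4 := e2 C σ hC
  have n3 : 0 ≤ ∑ y ∈ s, (A y - h / Q) ^ 2 := sum_nonneg fun _ _ => sq_nonneg _
  rw [e4] at cs
  refine cs.trans ?_
  rw [e3, hA2] at *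
  exact mul_le_mul_of_nonneg_left (by linarith) n3

open Finset Classical in
lemma aux_one {Fq Fk : Type} [Field Fq] [Field Fk] [Fintype Fq] [Fintype Fk] [Algebra Fq Fk]
    (b : Fk) (hb : b ≠ 0) (S : Finset Fq) :
    ((univ.filter (fun x : Fk => Algebra.trace Fq Fk (b * x) ∈ S)).card : ℝ) * Fintype.card Fq
      = S.card * Fintype.card Fk := by
  refine aux_fiber ((Algebra.trace Fq Fk).comp (LinearMap.mulLeft Fq b)) ?_ S
  intro y
  obtain ⟨z, hz⟩ := Algebra.trace_surjective Fq Fk y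
  exact ⟨b⁻¹ * z, by simp [hb, hz]⟩

open Finset Classical in
lemma aux_two {Fq Fk : Type} [Field Fq] [Field Fk] [Fintype Fq] [Fintype Fk] [Algebra Fq Fk]
    (b t : Fk) (hb : b ≠ 0) (ht : ∀ c : Fq, algebraMap Fq Fk c ≠ t) :
    ((univ.filter (fun x : Fk => Algebra.trace Fq Fk (b * x) ≠ 0 ∧
      Algebra.trace Fq Fk (b * (t * x)) ≠ 0)).card : ℝ) * (Fintype.card Fq) ^ 2
      = ((Fintype.card Fq : ℝ) - 1) ^ 2 * Fintype.card Fk := by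
  let L : Fk →ₗ[Fq] Fq × Fq := LinearMap.prod
    ((Algebra.trace Fq Fk).comp (LinearMap.mulLeft Fq b))
    ((Algebra.trace Fq Fk).comp (LinearMap.mulLeft Fq (b * t)))
  have hL : Function.Surjective L := by
    rw [← LinearMap.range_eq_top]
    by_contra hne
    obtain ⟨g, hg0, hg⟩ := Submodule.exists_le_ker_of_lt_top _ (lt_top_iff_ne_top.mpr hne)
    apply hg0
    have hgg : ∀ u v : Fq, g (u, v) = u * g (1, 0) + v * g (0, 1) := by
      intro u v
      have : ((u, v) : Fq × Fq) = u • (1, 0) + v • (0, 1) := by simp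
      rw [this, map_add, map_smul, map_smul]; simp
    set α := g (1, 0)
    set β := g (0, 1)
    have hz : ∀ x : Fk, Algebra.trace Fq Fk
        ((algebraMap Fq Fk α * b + algebraMap Fq Fk β * (b * t)) * x) = 0 := by
      intro x
      have h1 : g (L x) = 0 := hg ⟨x, rfl⟩
      have h2 : L x = (Algebra.trace Fq Fk (b * x), Algebra.trace Fq Fk (b * t * x)) := rfl
      rw [h2, hgg] at h1
      have : (algebraMap Fq Fk α * b + algebraMap Fq Fk β * (b * t)) * x
        = α • (b * x) + β • (b * t * x) := by
        rw [Algebra.smul_def, Algebra.smul_def]; ring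
      rw [this, map_add, map_smul, map_smul, smul_eq_mul, smul_eq_mul, ← h1]; ring
    have hz0 : algebraMap Fq Fk α * b + algebraMap Fq Fk β * (b * t) = 0 := by
      by_contra hc
      obtain ⟨z, hz1⟩ := Algebra.trace_surjective Fq Fk 1
      have := hz ((algebraMap Fq Fk α * b + algebraMap Fq Fk β * (b * t))⁻¹ * z)
      rw [mul_inv_cancel_left₀ hc, hz1] at this
      exact one_ne_zero this
    have hz1 : algebraMap Fq Fk α + algebraMap Fq Fk β * t = 0 := by
      have : b * (algebraMap Fq Fk α + algebraMap Fq Fk β * t) = 0 := by rw [← hz0]; ring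
      exact (mul_eq_zero.mp this).resolve_left hb
    have hβ : β = 0 := by
      by_contra hβ
      apply ht (-α / β)
      have : algebraMap Fq Fk β ≠ 0 := by simpa using hβ
      rw [map_div₀, map_neg]
      field_simp
      linear_combination -hz1
    have hα : α = 0 := by simpa [hβ] using hz1
    apply LinearMap.ext
    rintro ⟨u, v⟩
    rw [hgg, hα, hβ]; simp
  have := aux_fiber L hL ((univ.erase 0) ×ˢ (univ.erase 0))
  have h2 : ∀ x, L x = (Algebra.trace Fq Fk (b * x), Algebra.trace Fq Fk (b * t * x)) :=
    fun _ => rfl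
  have hc : 1 ≤ Fintype.card Fq := Fintype.card_pos
  simp only [h2, mem_product, mem_erase, mem_univ, and_true, card_product, Fintype.card_prod,
    card_erase_of_mem, card_univ, mul_assoc] at this
  push_cast [hc] at this
  rw [pow_two, pow_two, ← this]

open Finset Classical in
lemma aux_pairs {Fq Ff Fk : Type} [Field Fq] [Field Ff] [Field Fk]
    [Fintype Fq] [Fintype Ff] [Fintype Fk]
    [Algebra Fq Ff] [Algebra Ff Fk] [Algebra Fq Fk] [IsScalarTower Fq Ff Fk] (n : ℕ) (hn : 0 < n)
    (hT : ∀ t : Fk, Algebra.norm Ff t = 1 → t ^ n = 1)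
    (hone : ∀ c : Fq, Algebra.norm Ff (algebraMap Fq Fk c) = 1 → c = 1)
    (b : Fk) (hb : b ≠ 0) (r K : ℝ) (hr : r = Fintype.card Fq) (hK : K = Fintype.card Fk) :
    ∑ y ∈ univ.erase (0 : Ff), ((univ.filter (fun x : Fk => Algebra.norm Ff x = y ∧
      Algebra.trace Fq Fk (b * x) ≠ 0)).card : ℝ) ^ 2 ≤
      (r - 1) * K / r + (n - 1) * ((r - 1) ^ 2 * K / r ^ 2) := by
  have hr0 : 0 < r := by rw [hr]; exact_mod_cast Fintype.card_pos
  set P : Finset (Fk × Fk) := univ.filter (fun p => Algebra.norm Ff p.1 = Algebra.norm Ff p.2 ∧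
    Algebra.trace Fq Fk (b * p.1) ≠ 0 ∧ Algebra.trace Fq Fk (b * p.2) ≠ 0) with hP
  set T : Finset Fk := univ.filter (fun t => Algebra.norm Ff t = 1) with hTd
  have h0 : ∀ x : Fk, Algebra.trace Fq Fk (b * x) ≠ 0 → x ≠ 0 := by
    rintro x hx rfl; simp at hx
  have e1 : P.card = ∑ y ∈ univ.erase (0 : Ff), (univ.filter (fun x : Fk => Algebra.norm Ff x = y ∧
      Algebra.trace Fq Fk (b * x) ≠ 0)).card ^ 2 := by
    rw [card_eq_sum_card_fiberwise (f := fun p : Fk × Fk => Algebra.norm Ff p.1)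
      (t := univ.erase 0)]
    · refine sum_congr rfl fun y _ => ?_
      rw [pow_two, ← card_product]
      congr 1
      ext ⟨x, x'⟩
      simp only [hP, mem_filter, mem_univ, true_and, mem_product]
      constructor
      · rintro ⟨⟨h1, h2, h3⟩, rfl⟩; exact ⟨⟨rfl, h2⟩, h1.symm, h3⟩
      · rintro ⟨⟨h1, h2⟩, h3, h4⟩; exact ⟨⟨h1.trans h3.symm, h2, h4⟩, h1⟩
    · intro p hp
      have hp := (mem_filter.mp (mem_coe.mp hp)).2
      simpa [Algebra.norm_eq_zero_iff] using h0 _ hp.2.1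
  have e2 : P.card ≤ ∑ t ∈ T, (univ.filter (fun x : Fk => Algebra.trace Fq Fk (b * x) ≠ 0 ∧
      Algebra.trace Fq Fk (b * (t * x)) ≠ 0)).card := by
    rw [card_eq_sum_card_fiberwise (f := fun p : Fk × Fk => p.2 / p.1) (t := T)]
    · refine sum_le_sum fun t _ => ?_
      have hh : ∀ p ∈ P.filter (fun p => p.2 / p.1 = t), p.2 = t * p.1 ∧
          Algebra.trace Fq Fk (b * p.1) ≠ 0 ∧ Algebra.trace Fq Fk (b * p.2) ≠ 0 := by
        intro p hp
        obtain ⟨hp1, rfl⟩ := mem_filter.mp hp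
        have hp := (mem_filter.mp hp1).2
        refine ⟨?_, hp.2⟩
        rw [div_mul_cancel₀ _ (h0 _ hp.2.1)]
      refine card_le_card_of_injOn Prod.fst ?_ ?_
      · intro p hp
        obtain ⟨h1, h2, h3⟩ := hh p hp
        rw [h1] at h3
        simp [h2, h3]
      · intro p hp p' hp' hpp
        obtain ⟨h1, -⟩ := hh p hp
        obtain ⟨h1', -⟩ := hh p' hp'
        exact Prod.ext hpp (by rw [h1, h1', hpp])
    · intro p hp
      have hp := (mem_filter.mp (mem_coe.mp hp)).2
      have := h0 _ hp.2.2
      have : Algebra.norm Ff p.2 ≠ 0 := by simpa [Algebra.norm_eq_zero_iff] using this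
      have hm : Algebra.norm Ff (p.2 / p.1) * Algebra.norm Ff p.2 = 1 * Algebra.norm Ff p.2 := by
        rw [one_mul, ← hp.1, ← map_mul, div_mul_cancel₀ _ (h0 _ hp.2.1), hp.1]
      simpa [hTd] using mul_right_cancel₀ this hm
  have hTc : T.card ≤ n := by
    have : T ⊆ (Polynomial.nthRoots n (1 : Fk)).toFinset := by
      intro t ht
      rw [Multiset.mem_toFinset, Polynomial.mem_nthRoots hn]
      exact hT t (mem_filter.mp ht).2
    exact (card_le_card this).trans ((Multiset.toFinset_card_le _).trans
      (Polynomial.card_nthRoots n 1))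
  have h1T : (1 : Fk) ∈ T := by simp [hTd]
  rw [← add_sum_erase _ _ h1T] at e2
  have g1 : ((univ.filter (fun x : Fk => Algebra.trace Fq Fk (b * x) ≠ 0 ∧
      Algebra.trace Fq Fk (b * (1 * x)) ≠ 0)).card : ℝ) = (r - 1) * K / r := by
    have := aux_one b hb (univ.erase (0 : Fq))
    have hc : 1 ≤ Fintype.card Fq := Fintype.card_pos
    simp only [mem_erase, mem_univ, and_true, card_erase_of_mem, card_univ] at this
    push_cast [hc] at this
    simp only [one_mul, and_self]
    rw [← hr, ← hK] at this
    field_simp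
    linarith
  have g2 : ∀ t ∈ T.erase 1, ((univ.filter (fun x : Fk => Algebra.trace Fq Fk (b * x) ≠ 0 ∧
      Algebra.trace Fq Fk (b * (t * x)) ≠ 0)).card : ℝ) = (r - 1) ^ 2 * K / r ^ 2 := by
    intro t ht
    have := aux_two (Fq := Fq) b t hb (by
      rintro c rfl
      obtain ⟨h1, h2⟩ := mem_erase.mp ht
      apply h1
      rw [hone c (mem_filter.mp h2).2, map_one])
    rw [← hr, ← hK] at this
    rw [eq_div_iff (by positivity)]
    exact this
  have e2' : (P.card : ℝ) ≤ _ := Nat.cast_le.mpr e2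
  push_cast at e2'
  rw [sum_congr rfl g2, g1, sum_const, nsmul_eq_mul, card_erase_of_mem h1T] at e2'
  have e1' : (P.card : ℝ) = _ := congrArg Nat.cast e1
  push_cast at e1'
  rw [← e1']
  refine e2'.trans ?_
  gcongr
  · rw [hK]; positivity
  · rw [Nat.cast_sub (card_pos.mpr ⟨1, h1T⟩)]
    have : (T.card : ℝ) ≤ n := by exact_mod_cast hTc
    simp [this]

open Finset Classical in
lemma aux_scale {Fq Ff Fk : Type} [Field Fq] [Field Ff] [Field Fk]
    [Fintype Fq] [Fintype Ff] [Fintype Fk]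
    [Algebra Fq Ff] [Algebra Ff Fk] [Algebra Fq Fk] [IsScalarTower Fq Ff Fk]
    (hco : Nat.Coprime (Fintype.card Fq - 1) (Module.finrank Ff Fk))
    (b : Fk) (c c' : Fq) (hc : c ≠ 0) (hc' : c' ≠ 0) :
    (univ.filter (fun x : Fk => Algebra.trace Fq Ff (Algebra.norm Ff x) = c ∧
      Algebra.trace Fq Fk (b * x) ≠ 0)).card ≤
    (univ.filter (fun x : Fk => Algebra.trace Fq Ff (Algebra.norm Ff x) = c' ∧
      Algebra.trace Fq Fk (b * x) ≠ 0)).card := by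
  obtain ⟨μ, hμ⟩ : ∃ μ : Fqˣ, (μ : Fq) ^ (Module.finrank Ff Fk) * c = c' := by
    have h1 : Nat.Coprime (Nat.card Fqˣ) (Module.finrank Ff Fk) := by
      rwa [Nat.card_eq_fintype_card, Fintype.card_units]
    obtain ⟨μ, hμ⟩ := (powCoprime h1).surjective (Units.mk0 (c' / c) (div_ne_zero hc' hc))
    refine ⟨μ, ?_⟩
    have := congrArg Units.val hμ
    simp only [powCoprime_apply, Units.val_pow_eq_pow_val, Units.val_mk0] at this
    rw [this, div_mul_cancel₀ _ hc]
  have hN : ∀ x : Fk, Algebra.norm Ff ((μ : Fq) • x) =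
      ((μ : Fq) ^ (Module.finrank Ff Fk)) • Algebra.norm Ff x := by
    intro x
    rw [Algebra.smul_def, IsScalarTower.algebraMap_apply Fq Ff Fk, map_mul, Algebra.norm_algebraMap,
      Algebra.smul_def, map_pow]
  refine card_le_card_of_injOn (fun x => (μ : Fq) • x) ?_ ?_
  · intro x hx
    have hx := (mem_filter.mp (mem_coe.mp hx)).2
    simp only [coe_filter, mem_univ, true_and, Set.mem_ofPred_eq]
    rw [hN, map_smul, hx.1, smul_eq_mul, hμ, mul_smul_comm, map_smul]
    exact ⟨rfl, smul_ne_zero μ.ne_zero hx.2⟩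
  · intro x _ y _ h
    exact smul_right_injective Fk μ.ne_zero h

open Finset Classical in
lemma aux_total {Fq Ff Fk : Type} [Field Fq] [Field Ff] [Field Fk]
    [Fintype Fq] [Fintype Ff] [Fintype Fk]
    [Algebra Fq Ff] [Algebra Ff Fk] [Algebra Fq Fk] [IsScalarTower Fq Ff Fk]
    (hco : Nat.Coprime (Fintype.card Fq - 1) (Module.finrank Ff Fk))
    (b : Fk) (c : Fq) (hc : c ≠ 0) :
    (univ.filter (fun x : Fk => Algebra.trace Fq Fk (b * x) ≠ 0)).card =
    (univ.filter (fun x : Fk => Algebra.trace Fq Ff (Algebra.norm Ff x) = 0 ∧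
      Algebra.trace Fq Fk (b * x) ≠ 0)).card + (Fintype.card Fq - 1) *
    (univ.filter (fun x : Fk => Algebra.trace Fq Ff (Algebra.norm Ff x) = c ∧
      Algebra.trace Fq Fk (b * x) ≠ 0)).card := by
  rw [card_eq_sum_card_fiberwise (f := fun x : Fk => Algebra.trace Fq Ff (Algebra.norm Ff x))
    (t := univ) (by intro x _; simp), ← add_sum_erase _ _ (mem_univ (0 : Fq))]
  simp only [filter_filter]
  congr 1
  · congr 1
    ext x; simp [and_comm]
  · rw [sum_congr rfl (g := fun _ => (univ.filter (fun x : Fk =>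
      Algebra.trace Fq Ff (Algebra.norm Ff x) = c ∧ Algebra.trace Fq Fk (b * x) ≠ 0)).card)]
    · simp
    · intro y hy
      have hy := (mem_erase.mp hy).1
      rw [← le_antisymm (aux_scale hco b y c hy hc) (aux_scale hco b c y hc hy)]
      congr 1
      ext x; simp [and_comm]

open Finset Classical in
lemma aux_main {Fq Ff Fk : Type} [Field Fq] [Field Ff] [Field Fk]
    [Fintype Fq] [Fintype Ff] [Fintype Fk]
    [Algebra Fq Ff] [Algebra Ff Fk] [Algebra Fq Fk] [IsScalarTower Fq Ff Fk] (n : ℕ) (hn : 0 < n)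
    (hT : ∀ t : Fk, Algebra.norm Ff t = 1 → t ^ n = 1)
    (hco : Nat.Coprime (Fintype.card Fq - 1) (Module.finrank Ff Fk))
    (b : Fk) (hb : b ≠ 0) (r F K : ℝ) (hr : r = Fintype.card Fq) (hF : F = Fintype.card Ff)
    (hK : K = Fintype.card Fk) (hnn : n * (F - 1) = K - 1) (X : ℝ) (hX0 : 0 ≤ X)
    (hX : X ^ 2 = F * K / r ^ 4) (hFr : r ≤ F) (c : Fq) (hc : c ≠ 0) :
    ((r - 1) * F * K / r ^ 2 - (F - r) * X) / (F - 1) ≤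
     ((univ.filter (fun x : Fk => Algebra.trace Fq Ff (Algebra.norm Ff x) = c ∧
      Algebra.trace Fq Fk (b * x) ≠ 0)).card : ℝ) := by
  have hr1 : 1 < r := by rw [hr]; exact_mod_cast Fintype.one_lt_card
  have hc1 : 1 ≤ Fintype.card Fq := Fintype.card_pos
  have hone : ∀ c : Fq, Algebra.norm Ff (algebraMap Fq Fk c) = 1 → c = 1 := by
    intro c h
    rw [IsScalarTower.algebraMap_apply Fq Ff Fk, Algebra.norm_algebraMap, ← map_pow] at h
    have h1 : c ^ Module.finrank Ff Fk = 1 := by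
      apply (algebraMap Fq Ff).injective; rw [h, map_one]
    have h2 : c ≠ 0 := by
      rintro rfl
      rw [zero_pow Module.finrank_pos.ne'] at h1
      exact zero_ne_one h1
    have h3 := FiniteField.pow_card_sub_one_eq_one c h2
    have h4 := orderOf_dvd_of_pow_eq_one h1
    have h5 := orderOf_dvd_of_pow_eq_one h3
    have := Nat.dvd_gcd h5 h4
    rw [hco] at this
    exact orderOf_eq_one_iff.mp (Nat.dvd_one.mp this)
  have htot : ((univ.filter (fun x : Fk => Algebra.trace Fq Fk (b * x) ≠ 0)).card : ℝ) = _ :=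
    congrArg Nat.cast (aux_total (Ff := Ff) hco b c hc)
  push_cast [hc1] at htot
  have hXc : ((univ.filter (fun x : Fk => Algebra.trace Fq Fk (b * x) ≠ 0)).card : ℝ)
      = (r - 1) * K / r := by
    have := aux_one b hb (univ.erase (0 : Fq))
    simp only [mem_erase, mem_univ, and_true, card_erase_of_mem, card_univ] at this
    push_cast [hc1] at this
    rw [← hr, ← hK] at this
    field_simp
    linarith
  set w : ℝ := ((univ.filter (fun x : Fk => Algebra.trace Fq Ff (Algebra.norm Ff x) = c ∧
      Algebra.trace Fq Fk (b * x) ≠ 0)).card : ℝ)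
  set M : ℝ := ((univ.filter (fun x : Fk => Algebra.trace Fq Ff (Algebra.norm Ff x) = 0 ∧
      Algebra.trace Fq Fk (b * x) ≠ 0)).card : ℝ) with hMd
  have h0 : ∀ x : Fk, Algebra.trace Fq Fk (b * x) ≠ 0 → Algebra.norm Ff x ≠ 0 := by
    intro x hx h
    rw [Algebra.norm_eq_zero_iff] at h
    subst h; simp at hx
  have hAh : ∑ y ∈ univ.erase (0 : Ff), (if Algebra.trace Fq Ff y = 0 then (1 : ℝ) else 0)
      = F / r - 1 := by
    have h1 := aux_one (1 : Ff) one_ne_zero ({0} : Finset Fq)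
    simp only [one_mul, mem_singleton, card_singleton, Nat.cast_one] at h1
    rw [← hr, ← hF] at h1
    have h2 := add_sum_erase univ (fun y : Ff => if Algebra.trace Fq Ff y = 0 then (1 : ℝ) else 0)
      (mem_univ 0)
    rw [sum_boole (s := univ)] at h2
    simp only [map_zero, if_true] at h2
    have : F / r = ((univ.filter (fun y : Ff => Algebra.trace Fq Ff y = 0)).card : ℝ) := by
      field_simp; linarith
    linarith
  have hcs := aux_cs (univ.erase (0 : Ff))
    (fun y => if Algebra.trace Fq Ff y = 0 then (1 : ℝ) else 0)
    (fun y => ((univ.filter (fun x : Fk => Algebra.norm Ff x = y ∧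
      Algebra.trace Fq Fk (b * x) ≠ 0)).card : ℝ)) (F - 1) (F / r - 1) ((r - 1) * K / r)
      ((r - 1) * K / r + (n - 1) * ((r - 1) ^ 2 * K / r ^ 2)) M (by linarith)
      (by
        have : 1 ≤ Fintype.card Ff := Fintype.card_pos
        rw [card_erase_of_mem (mem_univ _), card_univ, Nat.cast_sub this, hF]; simp)
      hAh (by simpa using hAh)
      (by
        rw [← hXc, card_eq_sum_card_fiberwise (f := fun x : Fk => Algebra.norm Ff x)
          (t := univ.erase 0)]
        · push_cast
          refine sum_congr rfl fun y _ => ?_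
          rw [filter_filter]
          congr 2
          ext x; simp [and_comm]
        · intro x hx
          simpa using h0 x (mem_filter.mp (mem_coe.mp hx)).2)
      (aux_pairs n hn hT hone b hb r K hr hK)
      (by
        rw [hMd, card_eq_sum_card_fiberwise (f := fun x : Fk => Algebra.norm Ff x)
          (t := univ.erase 0)]
        · push_cast
          refine sum_congr rfl fun y _ => ?_
          rw [filter_filter]
          split_ifs with hy
          · rw [one_mul]
            congr 2
            ext x
            simp only [mem_filter, mem_univ, true_and]
            constructor
            · rintro ⟨rfl, h⟩; exact ⟨⟨hy, h⟩, rfl⟩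
            · rintro ⟨⟨_, h⟩, h'⟩; exact ⟨h', h⟩
          · rw [zero_mul, eq_comm, Nat.cast_eq_zero, card_eq_zero, filter_eq_empty_iff]
            rintro x _ ⟨⟨h1, _⟩, rfl⟩
            exact hy h1
        · intro x hx
          simpa using h0 x (mem_filter.mp (mem_coe.mp hx)).2.2)
  have hF1 : 0 < F - 1 := by linarith
  have hn' : (n : ℝ) = (K - 1) / (F - 1) := by field_simp; linarith
  have hsq : (F / r - 1 - (F / r - 1) ^ 2 / (F - 1)) *
      ((r - 1) * K / r + (n - 1) * ((r - 1) ^ 2 * K / r ^ 2) - ((r - 1) * K / r) ^ 2 / (F - 1))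
      = ((r - 1) * (F - r) * X / (F - 1)) ^ 2 := by
    have hR : ((r - 1) * (F - r) * X / (F - 1)) ^ 2
        = ((r - 1) * (F - r)) ^ 2 * (F * K / r ^ 4) / (F - 1) ^ 2 := by
      rw [← hX, ← mul_pow, ← div_pow]
    rw [hR, hn']
    field_simp
    ring
  rw [hsq] at hcs
  have hE : 0 ≤ (r - 1) * (F - r) * X / (F - 1) :=
    div_nonneg (mul_nonneg (mul_nonneg (by linarith) (by linarith)) hX0) hF1.le
  have hab := (abs_le.mp (abs_le_of_sq_le_sq hcs hE)).2
  rw [hXc, ← hr] at htot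
  have hw : (r - 1) * (((r - 1) * F * K / r ^ 2 - (F - r) * X) / (F - 1)) ≤ (r - 1) * w := by
    have e : (r - 1) * (((r - 1) * F * K / r ^ 2 - (F - r) * X) / (F - 1)) =
      (r - 1) * K / r - (F / r - 1) * ((r - 1) * K / r) / (F - 1)
        - (r - 1) * (F - r) * X / (F - 1) := by
      field_simp
      ring
    rw [e]; linarith
  exact le_of_mul_le_mul_left hw (by linarith)

/-- **Theorem 2, bound for `f > 1`.** Let `q` be a power of a prime `p`,
`f ∣ k`, `f > 1`, `gcd(k/f, q-1) = 1`, `a ∈ F_qˣ`, and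
`D = {x ∈ F_{q^k} : Tr_{q^f/q}(x^{(q^k-1)/(q^f-1)}) + a = 0}`.  Then for every
`b ∈ F_{q^k}ˣ` the Hamming weight `w(c_b) = #{d ∈ D : Tr_{q^k/q}(bd) ≠ 0}` satisfies
`w(c_b) ≥ ((q-1)q^{f+k-2} − (q^f-q)q^{(k+f)/2-2})/(q^f-1)`, this lower bound is strictly
positive, and consequently `C_D` has dimension `k` (`b ↦ c_b` is injective). -/
theorem stmt15 (p e q f k : ℕ) [Fact p.Prime] (he : 0 < e) (hq : q = p ^ e)
    (hf : 1 < f) (hfk : f ∣ k) (hgcd : Nat.gcd (k / f) (q - 1) = 1)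
    (Fq Ff Fk : Type) [Field Fq] [Field Ff] [Field Fk]
    [Fintype Fq] [Fintype Ff] [Fintype Fk]
    [Algebra Fq Ff] [Algebra Ff Fk] [Algebra Fq Fk] [IsScalarTower Fq Ff Fk]
    (hcq : Fintype.card Fq = q) (hcf : Fintype.card Ff = q ^ f)
    (hck : Fintype.card Fk = q ^ k)
    (hnorm : ∀ x : Fk,
      algebraMap Ff Fk (Algebra.norm Ff x) = x ^ ((q ^ k - 1) / (q ^ f - 1)))
    (a : Fq) (ha : a ≠ 0) :
    (0 : ℝ) < (((q : ℝ) - 1) * (q : ℝ) ^ (f + k - 2) -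
        ((q : ℝ) ^ f - q) * (q : ℝ) ^ (((k : ℝ) + f) / 2 - 2)) / ((q : ℝ) ^ f - 1) ∧
    (∀ b : Fk, b ≠ 0 →
      (((q : ℝ) - 1) * (q : ℝ) ^ (f + k - 2) -
          ((q : ℝ) ^ f - q) * (q : ℝ) ^ (((k : ℝ) + f) / 2 - 2)) / ((q : ℝ) ^ f - 1)
        ≤ (Nat.card {d : Fk // Algebra.trace Fq Ff (Algebra.norm Ff d) + a = 0 ∧
            Algebra.trace Fq Fk (b * d) ≠ 0} : ℝ)) ∧
    Function.Injective
      (fun (b : Fk)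
          (d : {x : Fk // Algebra.trace Fq Ff (Algebra.norm Ff x) + a = 0}) =>
        Algebra.trace Fq Fk (b * (d : Fk))) := by
  classical
  have hp := (Fact.out : p.Prime)
  have hq2 : 2 ≤ q := by
    rw [hq]; exact hp.two_le.trans (Nat.le_self_pow he.ne' p)
  have hk : 0 < k := by
    rcases Nat.eq_zero_or_pos k with h | h
    · have := Fintype.one_lt_card (α := Fk)
      rw [hck, h] at this; simp at this
    · exact h
  have hfk' : f ≤ k := Nat.le_of_dvd hk hfk
  have hr2 : (2 : ℝ) ≤ q := by exact_mod_cast hq2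
  have hr0 : (0 : ℝ) < q := by linarith
  set r : ℝ := (q : ℝ) with hr
  have hfin : Module.finrank Ff Fk = k / f := by
    have h := Module.card_eq_pow_finrank (K := Ff) (V := Fk)
    rw [hck, hcf, ← pow_mul] at h
    have := Nat.pow_right_injective hq2 h
    rw [this, Nat.mul_div_cancel_left _ (by omega)]
  have hco : Nat.Coprime (Fintype.card Fq - 1) (Module.finrank Ff Fk) := by
    rw [hcq, hfin]; exact Nat.Coprime.symm hgcd
  have hqf : 1 < q ^ f := Nat.one_lt_pow (by omega) hq2
  have hfle : q ^ f ≤ q ^ k := Nat.pow_le_pow_right (by omega) hfk'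
  have hdvd : q ^ f - 1 ∣ q ^ k - 1 := by
    obtain ⟨m, rfl⟩ := hfk
    rw [pow_mul]
    exact Nat.sub_one_dvd_pow_sub_one _ _
  set n := (q ^ k - 1) / (q ^ f - 1) with hn
  have hn0 : 0 < n := Nat.div_pos (by omega) (by omega)
  have hnn : (n : ℝ) * (r ^ f - 1) = r ^ k - 1 := by
    have h : n * (q ^ f - 1) = q ^ k - 1 := Nat.div_mul_cancel hdvd
    have h' : ((n * (q ^ f - 1) : ℕ) : ℝ) = ((q ^ k - 1 : ℕ) : ℝ) := congrArg Nat.cast h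
    rw [Nat.cast_mul, Nat.cast_sub (by omega), Nat.cast_sub (by omega)] at h'
    push_cast at h'
    exact h'
  set X : ℝ := r ^ (((k : ℝ) + f) / 2 - 2) with hXd
  have hX0 : 0 < X := Real.rpow_pos_of_pos hr0 _
  have hX : X ^ 2 = r ^ f * r ^ k / r ^ 4 := by
    rw [hXd, ← Real.rpow_natCast, ← Real.rpow_mul hr0.le, ← pow_add, ← Real.rpow_natCast r (f + k),
      ← Real.rpow_natCast r 4, ← Real.rpow_sub hr0]
    congr 1
    push_cast
    ring
  have hF : r ≤ r ^ f := le_self_pow₀ (by linarith) (by omega)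
  have hFK : r ^ f ≤ r ^ k := pow_le_pow_right₀ (by linarith) hfk'
  have hsub : r ^ (f + k - 2) = r ^ f * r ^ k / r ^ 2 := by
    rw [pow_sub₀ _ hr0.ne' (by omega), pow_add, div_eq_mul_inv]
  have hpos : (0 : ℝ) < ((r - 1) * r ^ (f + k - 2) - (r ^ f - r) * X) / (r ^ f - 1) := by
    apply div_pos _ (by linarith)
    have hXle : X ≤ r ^ k / r ^ 2 := by
      refine (sq_le_sq₀ hX0.le (by positivity)).mp ?_
      have e : (r ^ k / r ^ 2) ^ 2 = r ^ k * r ^ k / r ^ 4 := by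
        rw [div_pow, ← pow_mul r 2 2, pow_two]
      rw [hX, e]
      gcongr
    rw [hsub, mul_div_assoc]
    have h1 : (r ^ f - r) * X ≤ (r ^ f - r) * (r ^ k / r ^ 2) :=
      mul_le_mul_of_nonneg_left hXle (by linarith)
    have h2 : 0 < r ^ k / r ^ 2 := by positivity
    have h3 : (r ^ f - r) * (r ^ k / r ^ 2) < (r - 1) * (r ^ f * (r ^ k / r ^ 2)) := by
      rw [← mul_assoc]
      apply mul_lt_mul_of_pos_right _ h2
      nlinarith
    linarith
  have hw : ∀ b : Fk, b ≠ 0 →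
      ((r - 1) * r ^ (f + k - 2) - (r ^ f - r) * X) / (r ^ f - 1)
        ≤ (Nat.card {d : Fk // Algebra.trace Fq Ff (Algebra.norm Ff d) + a = 0 ∧
            Algebra.trace Fq Fk (b * d) ≠ 0} : ℝ) := by
    intro b hb
    have hT : ∀ t : Fk, Algebra.norm Ff t = 1 → t ^ n = 1 := by
      intro t ht
      rw [← hnorm, ht, map_one]
    have := aux_main (Fq := Fq) n hn0 hT hco b hb r (r ^ f) (r ^ k) (by rw [hcq])
      (by rw [hcf]; simp [hr]) (by rw [hck]; simp [hr]) hnn X hX0.le hX hF (-a) (neg_ne_zero.mpr ha)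
    rw [hsub, ← mul_div_assoc, ← mul_assoc]
    convert this using 2
    rw [Nat.card_eq_fintype_card, Fintype.card_subtype]
    simp only [add_eq_zero_iff_eq_neg]
  refine ⟨hpos, hw, ?_⟩
  intro b b' hbb
  by_contra hne
  have h1 := hpos.trans_le (hw (b - b') (sub_ne_zero.mpr hne))
  have h2 := Nat.cast_pos.mp h1
  obtain ⟨⟨d, hd1, hd2⟩⟩ := (Nat.card_pos_iff.mp h2).1
  apply hd2
  have := congrFun hbb ⟨d, hd1⟩
  simp only at this
  rw [sub_mul, map_sub, this, sub_self]
end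

section
/- Let q be a power of a prime p, let k be a positive integer with k ≡ 0 (mod 4) and gcd(k/2, q−1) = 1, let a ∈ F_q^*, and let D = {x ∈ F_{q^k} : Tr_{q^2/q}(x^{(q^k−1)/(q^2−1)}) + a = 0}. Then #{b ∈ F_{q^k}^* : w(c_b) = (q^k − q^{k/2})/(q+1)} = (q^k − 1)/(q+1) and #{b ∈ F_{q^k}^* : w(c_b) = (q^k + q^{k/2 − 1})/(q+1)} = q(q^k − 1)/(q+1); in particular every nonzero codeword of C_D has one of these two weights, C_D has length q(q^k−1)/(q²−1), dimension k, and minimum distance (q^k − q^{k/2})/(q+1). -/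
theorem aux_mem_range {K L : Type} [Field K] [Field L] [Fintype K] [Fintype L] [Algebra K L]
    (x : L) (hx : x ^ Fintype.card K = x) : ∃ c : K, algebraMap K L c = x := by
  classical
  have h1 : (Finset.univ.image (algebraMap K L)) ⊆
      (Polynomial.X ^ Fintype.card K - Polynomial.X : Polynomial L).roots.toFinset := by
    intro y hy
    obtain ⟨c, -, rfl⟩ := Finset.mem_image.1 hy
    rw [Multiset.mem_toFinset,
      Polynomial.mem_roots (FiniteField.X_pow_card_sub_X_ne_zero L Fintype.one_lt_card)]
    simp [← map_pow, FiniteField.pow_card]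
  have h2 := Finset.eq_of_subset_of_card_le h1 (by
    rw [Finset.card_image_of_injective _ (algebraMap K L).injective, Finset.card_univ]
    refine (Multiset.toFinset_card_le _).trans ((Polynomial.card_roots' _).trans ?_)
    rw [FiniteField.X_pow_card_sub_X_natDegree_eq L Fintype.one_lt_card])
  have h3 : x ∈ (Polynomial.X ^ Fintype.card K - Polynomial.X : Polynomial L).roots.toFinset := by
    rw [Multiset.mem_toFinset,
      Polynomial.mem_roots (FiniteField.X_pow_card_sub_X_ne_zero L Fintype.one_lt_card)]
    simp [hx]
  rw [← h2] at h3
  obtain ⟨c, -, hc⟩ := Finset.mem_image.1 h3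
  exact ⟨c, hc⟩

theorem aux_char {K : Type} [Field K] [Fintype K] [CharP K 2] :
    ∃ ψ : AddChar K ℤ, ψ.IsPrimitive := by
  let _ := ZMod.algebra K 2
  let φ : AddChar (ZMod 2) ℤ :=
    { toFun := fun x => if x = 0 then 1 else -1
      map_zero_eq_one' := by simp
      map_add_eq_mul' := by decide }
  refine ⟨φ.compAddMonoidHom (Algebra.trace (ZMod 2) K).toAddMonoidHom, ?_⟩
  apply AddChar.IsPrimitive.of_ne_one
  intro h
  obtain ⟨x, hx⟩ := Algebra.trace_surjective (ZMod 2) K 1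
  have := DFunLike.congr_fun h x
  simp [hx] at this
  simp [φ] at this

theorem aux_isPow {L : Type} [Field L] [Fintype L] (d M : ℕ) (hM : M ≠ 0)
    (hd : Fintype.card L = d * M + 1) (z : L) (hz : z ^ M = 1) : ∃ v, v ^ d = z := by
  classical
  have hz0 : z ≠ 0 := by rintro rfl; simp [hM] at hz
  obtain ⟨g, hg⟩ := IsCyclic.exists_generator (α := Lˣ)
  have ho : orderOf g = d * M := by
    rw [orderOf_eq_card_of_forall_mem_zpowers hg, Nat.card_eq_fintype_card, Fintype.card_units, hd]
    simp
  obtain ⟨j, hj⟩ := mem_powers_iff_mem_zpowers.2 (hg (Units.mk0 z hz0))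
  have h1 : g ^ (j * M) = 1 := by
    have : Units.mk0 z hz0 ^ M = 1 := by ext; simpa using hz
    rw [← hj] at this
    simpa [pow_mul] using this
  have h2 := orderOf_dvd_of_pow_eq_one h1
  rw [ho] at h2
  obtain ⟨i, rfl⟩ := Nat.dvd_of_mul_dvd_mul_right (Nat.pos_of_ne_zero hM) h2
  refine ⟨(g : L) ^ i, ?_⟩
  have := congrArg Units.val hj
  simp only [Units.val_pow_eq_pow_val, Units.val_mk0] at this
  rw [← this, ← pow_mul, mul_comm]

open Classical in
theorem aux_powsum {L : Type} [Field L] [Fintype L] (d M : ℕ) (hM : M ≠ 0) (hd0 : d ≠ 0)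
    (hd : Fintype.card L = d * M + 1) (f : L → ℤ) :
    ∑ x : L, f (x ^ d) = f 0 + d * ∑ z ∈ Finset.univ.filter (fun z : L => z ^ M = 1), f z := by
  obtain ⟨g, hg⟩ := IsCyclic.exists_generator (α := Lˣ)
  have ho : orderOf g = d * M := by
    rw [orderOf_eq_card_of_forall_mem_zpowers hg, Nat.card_eq_fintype_card, Fintype.card_units, hd]
    simp
  have hprim : IsPrimitiveRoot ((g : L) ^ M) d := by
    have h := IsPrimitiveRoot.orderOf (g : L)
    rw [orderOf_units, ho] at h
    exact h.pow (Nat.pos_of_ne_zero (mul_ne_zero hd0 hM)) (mul_comm _ _)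
  have hcount : ∀ z : L, ((Finset.univ.filter (fun x : L => x ^ d = z)).card : ℤ) =
      (if z = 0 then 1 else 0) + d * (if z ^ M = 1 then 1 else 0) := by
    intro z
    by_cases hz : z = 0
    · subst hz
      have : (Finset.univ.filter (fun x : L => x ^ d = 0)) = {0} := by
        ext x; simp [hd0]
      rw [this]; simp [hM]
    · have h1 : (Finset.univ.filter (fun x : L => x ^ d = z)) =
          (Polynomial.nthRoots d z).toFinset := by
        ext x; simp [Polynomial.mem_nthRoots (Nat.pos_of_ne_zero hd0)]
      rw [h1, Multiset.toFinset_card_of_nodup (hprim.nthRoots_nodup hz), hprim.card_nthRoots]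
      have h2 : (∃ α : L, α ^ d = z) ↔ z ^ M = 1 := by
        constructor
        · rintro ⟨α, rfl⟩
          have : α ≠ 0 := by rintro rfl; simp [hd0] at hz
          rw [← pow_mul]
          have h3 := FiniteField.pow_card_sub_one_eq_one α this
          rwa [hd, Nat.add_sub_cancel] at h3
        · exact aux_isPow d M hM hd z
      simp [h2, hz]
  rw [← Finset.sum_fiberwise (s := Finset.univ) (g := fun x : L => x ^ d)]
  have : ∀ z : L, ∑ x : L with x ^ d = z, f (x ^ d) =
      (if z = 0 then f z else 0) + d * (if z ^ M = 1 then f z else 0) := by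
    intro z
    rw [Finset.sum_congr rfl (g := fun _ => f z), Finset.sum_const, nsmul_eq_mul, hcount]
    · split_ifs <;> ring
    · intro x hx
      rw [(Finset.mem_filter.1 hx).2]
  simp_rw [this]
  rw [Finset.sum_add_distrib, ← Finset.mul_sum, Finset.sum_filter]
  simp

theorem aux_frob {L : Type} [Field L] [CharP L 2] (e : ℕ) (x y : L) :
    (x + y) ^ (2 ^ e) = x ^ (2 ^ e) + y ^ (2 ^ e) :=
  add_pow_char_pow x y 2 e

open Classical in
theorem aux_sq {L : Type} [Field L] [Fintype L] [CharP L 2] (e q : ℕ) (hq : q = 2 ^ e)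
    (χ : AddChar L ℤ) (hχ : χ.IsPrimitive) (hχq : ∀ x, χ (x ^ q) = χ x) (b : L) :
    (∑ x : L, χ (b * x ^ (q + 1))) ^ 2 = ∑ u : L, χ (b * u ^ (q + 1)) *
      (if b * u + b ^ q * u ^ (q ^ 2) = 0 then (Fintype.card L : ℤ) else 0) := by
  have hadd : ∀ x y : L, (x + y) ^ q = x ^ q + y ^ q := by rw [hq]; exact aux_frob e
  have hinj : Function.Injective (fun x : L => x ^ q) := by
    intro x y hxy
    have h1 : (x + y) ^ q = 0 := by
      rw [hadd]; simp only at hxy; rw [hxy]; exact CharTwo.add_self_eq_zero _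
    have h2 := pow_eq_zero_iff (n := q) (by rw [hq]; positivity) |>.1 h1
    exact CharTwo.add_eq_zero.1 h2
  have hbij : Function.Bijective (fun x : L => x ^ q) := Finite.injective_iff_bijective.1 hinj
  rw [sq, Finset.sum_mul]
  have h1 : ∀ x : L, χ (b * x ^ (q + 1)) * ∑ y : L, χ (b * y ^ (q + 1)) =
      ∑ u : L, χ (b * u ^ (q + 1)) * χ (x ^ q * (b * u + b ^ q * u ^ (q ^ 2))) := by
    intro x
    rw [Finset.mul_sum, ← Equiv.sum_comp (Equiv.addLeft x)]
    refine Finset.sum_congr rfl fun u _ => ?_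
    have h2 : χ (x ^ q * (b * u + b ^ q * u ^ (q ^ 2))) = χ (x ^ q * (b * u) + x * b * u ^ q) := by
      rw [mul_add, AddChar.map_add_eq_mul, AddChar.map_add_eq_mul, ← hχq (x * b * u ^ q)]
      congr 2
      rw [mul_pow, mul_pow, ← pow_mul, sq, mul_assoc]
    rw [h2, ← AddChar.map_add_eq_mul, ← AddChar.map_add_eq_mul]
    congr 1
    simp only [Equiv.coe_addLeft, pow_succ, hadd]
    linear_combination (b * x ^ q * x) * (CharTwo.two_eq_zero (R := L))
  rw [Finset.sum_congr rfl fun x _ => h1 x, Finset.sum_comm]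
  refine Finset.sum_congr rfl fun u _ => ?_
  rw [← Finset.mul_sum]
  congr 1
  rw [Function.Bijective.sum_comp hbij (fun x => χ (x * (b * u + b ^ q * u ^ (q ^ 2)))),
    AddChar.sum_mulShift _ hχ]
  split_ifs <;> simp

theorem aux_sign (q : ℕ) (hq : 2 ≤ q) (S : ℤ) (h1 : ((q : ℤ) + 1) ∣ S - 1) (j : ℕ)
    (hS : S ^ 2 = ((q : ℤ) ^ j) ^ 2) : S = (-1) ^ j * (q : ℤ) ^ j := by
  have h2 : ((q : ℤ) + 1) ∣ (q : ℤ) ^ j - (-1) ^ j := by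
    have := sub_dvd_pow_sub_pow (q : ℤ) (-1) j
    simpa using this
  have h3 : ¬ ((q : ℤ) + 1) ∣ 2 := by
    intro h
    have := Int.le_of_dvd (by norm_num) h
    omega
  rcases sq_eq_sq_iff_eq_or_eq_neg.1 hS with h | h <;>
  rcases neg_one_pow_eq_or ℤ j with hj | hj <;> rw [hj] at h2 ⊢ <;> rw [h] at h1 ⊢
  · ring
  · exact absurd (by have := dvd_sub h2 h1; ring_nf at this; rw [add_comm]; exact this) h3
  · exact absurd (by have := dvd_add h2 h1; ring_nf at this; rw [← dvd_neg, add_comm]; exact this) h3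
  · ring

open Classical in
theorem aux_S {L Fq Ff : Type} [Field L] [Fintype L] [CharP L 2] [Field Fq] [Fintype Fq]
    [Field Ff] [Fintype Ff] [Algebra Fq L] [Algebra Ff L] (e q m M n : ℕ) (he : 0 < e)
    (hq : q = 2 ^ e) (hcq : Fintype.card Fq = q) (hcf : Fintype.card Ff = q ^ 2)
    (hck : Fintype.card L = q ^ (4 * m)) (hM0 : M ≠ 0) (hM : Fintype.card L = (q + 1) * M + 1)
    (hn : M = (q - 1) * n)
    (χ : AddChar L ℤ) (hχ : χ.IsPrimitive) (hχq : ∀ x, χ (x ^ q) = χ x)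
    (hχ1 : ∀ c : Fq, χ (algebraMap Fq L c) = 1) (b : L) (hb : b ≠ 0) :
    (∑ x : L, χ (b * x ^ (q + 1))) =
      if b ^ M = 1 then - (q : ℤ) ^ (2 * m + 1) else (q : ℤ) ^ (2 * m) := by
  have hq2 : 2 ≤ q := by rw [hq]; exact Nat.le_self_pow he.ne' 2
  have hdvd : ((q : ℤ) + 1) ∣ (∑ x : L, χ (b * x ^ (q + 1))) - 1 := by
    rw [aux_powsum (q + 1) M hM0 (by omega) hM (fun z => χ (b * z))]
    simp
  have hsq := aux_sq e q hq χ hχ hχq b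
  split_ifs with hbM
  · obtain ⟨v, hv⟩ := aux_isPow (q + 1) M hM0 hM b hbM
    have hv0 : v ≠ 0 := by rintro rfl; apply hb; rw [← hv]; simp
    have hiff : ∀ u : L, b * u + b ^ q * u ^ (q ^ 2) = 0 ↔ (v * u) ^ (q ^ 2) = v * u := by
      intro u
      have : b * u + b ^ q * u ^ (q ^ 2) = v ^ q * (v * u + (v * u) ^ (q ^ 2)) := by
        rw [← hv]; ring
      rw [this, mul_eq_zero, or_iff_right (pow_ne_zero _ hv0), CharTwo.add_eq_zero, eq_comm]
    have hterm : ∀ u : L, χ (b * u ^ (q + 1)) *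
      (if b * u + b ^ q * u ^ (q ^ 2) = 0 then (Fintype.card L : ℤ) else 0) =
      (if (v * u) ^ (q ^ 2) = v * u then (Fintype.card L : ℤ) else 0) := by
      intro u
      rw [hiff]
      split_ifs with h
      · have h3 : ((v * u) ^ (q + 1)) ^ Fintype.card Fq = (v * u) ^ (q + 1) := by
          rw [hcq, ← pow_mul, show (q + 1) * q = q ^ 2 + q by ring, pow_add, h]; ring
        obtain ⟨c, hc⟩ := aux_mem_range _ h3
        rw [← hv, ← mul_pow, ← hc, hχ1, one_mul]
      · simp
    rw [Finset.sum_congr rfl fun u _ => hterm u,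
      show (∑ u : L, if (v * u) ^ (q ^ 2) = v * u then (Fintype.card L : ℤ) else 0) = _ from
        Equiv.sum_comp (Equiv.mulLeft₀ v hv0)
        (fun y : L => if y ^ (q ^ 2) = y then (Fintype.card L : ℤ) else 0),
      ← Finset.sum_filter, Finset.sum_const] at hsq
    have hc : (Finset.univ.filter (fun y : L => y ^ (q ^ 2) = y)).card = q ^ 2 := by
      have : (Finset.univ.filter (fun y : L => y ^ (q ^ 2) = y)) =
          Finset.univ.image (algebraMap Ff L) := by
        ext y
        simp only [Finset.mem_filter, Finset.mem_univ, true_and, Finset.mem_image]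
        constructor
        · intro h; rw [← hcf] at h; exact aux_mem_range y h
        · rintro ⟨c, rfl⟩
          rw [← map_pow, ← hcf, FiniteField.pow_card]
      rw [this, Finset.card_image_of_injective _ (algebraMap Ff L).injective, Finset.card_univ,
        hcf]
    rw [hc, hck] at hsq
    rw [aux_sign q hq2 _ hdvd (2 * m + 1) (by rw [hsq]; push_cast; rw [nsmul_eq_mul]; push_cast; ring)]
    rw [pow_succ (-1 : ℤ), pow_mul]; simp
  · have hterm : ∀ u : L, χ (b * u ^ (q + 1)) *
      (if b * u + b ^ q * u ^ (q ^ 2) = 0 then (Fintype.card L : ℤ) else 0) =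
      (if u = 0 then (Fintype.card L : ℤ) else 0) := by
      intro u
      by_cases hu : u = 0
      · subst hu
        simp; omega
      · rw [if_neg hu, if_neg, mul_zero]
        intro h
        apply hbM
        have h4 := CharTwo.add_eq_zero.1 h
        obtain ⟨r, rfl⟩ : ∃ r, q = r + 1 := ⟨q - 1, by omega⟩
        have h5 : (b * u ^ (r + 1 + 1)) ^ r = 1 := by
          apply mul_left_cancel₀ (mul_ne_zero hb hu)
          rw [mul_one]; refine Eq.trans ?_ h4.symm; ring
        have h6 : (u ^ (r + 1 + 1)) ^ M = 1 := by
          rw [← pow_mul]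
          have h3 := FiniteField.pow_card_sub_one_eq_one u hu
          rwa [hM, Nat.add_sub_cancel] at h3
        have h7 : (b * u ^ (r + 1 + 1)) ^ M = 1 := by
          rw [hn, Nat.add_sub_cancel, pow_mul, h5, one_pow]
        rwa [mul_pow, h6, mul_one] at h7
    rw [Finset.sum_congr rfl fun u _ => hterm u] at hsq
    simp only [Finset.sum_ite_eq', Finset.mem_univ, if_true] at hsq
    rw [hck] at hsq
    rw [aux_sign q hq2 _ hdvd (2 * m) (by rw [hsq]; push_cast; ring)]
    rw [pow_mul]; simp

open Classical in
theorem aux_count {L Fq : Type} [Field L] [Fintype L] [Field Fq] [Fintype Fq] [Algebra Fq L]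
    (ψ : AddChar Fq ℤ) (hψ : ψ.IsPrimitive) (A : Finset L) (b : L) :
    (Fintype.card Fq : ℤ) * ((A.filter (fun x => Algebra.trace Fq L (b * x) ≠ 0)).card : ℤ) =
      Fintype.card Fq * A.card -
        ∑ l : Fq, ∑ x ∈ A, ψ (Algebra.trace Fq L (algebraMap Fq L l * b * x)) := by
  rw [Finset.sum_comm]
  have h : ∀ x : L, ∑ l : Fq, ψ (Algebra.trace Fq L (algebraMap Fq L l * b * x)) =
      if Algebra.trace Fq L (b * x) = 0 then (Fintype.card Fq : ℤ) else 0 := by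
    intro x
    have : ∀ l : Fq, Algebra.trace Fq L (algebraMap Fq L l * b * x) =
        l * Algebra.trace Fq L (b * x) := by
      intro l
      rw [mul_assoc, ← Algebra.smul_def, map_smul, smul_eq_mul]
    simp_rw [this]
    rw [AddChar.sum_mulShift _ hψ]
    split_ifs <;> simp
  rw [Finset.sum_congr rfl fun x _ => h x, ← Finset.sum_filter, Finset.sum_const, nsmul_eq_mul]
  have h2 := Finset.card_filter_add_card_filter_not (s := A)
    (fun x => Algebra.trace Fq L (b * x) = 0)
  rw [← h2]; push_cast; ring

open Classical in
theorem aux_scale_s16 {L Fq : Type} [Field L] [Fintype L] [Field Fq] [Fintype Fq] [Algebra Fq L]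
    (j : ℕ) (hj : Nat.gcd j (Fintype.card Fq - 1) = 1) (T : L → Fq)
    (hT : ∀ (l : Fq) (x : L), T (algebraMap Fq L l * x) = l ^ j * T x)
    (P : L → Prop) (hP : ∀ (l : Fq) (x : L), l ≠ 0 → (P (algebraMap Fq L l * x) ↔ P x))
    (c : Fq) (hc : c ≠ 0) :
    (Fintype.card Fq - 1) * (Finset.univ.filter (fun x : L => T x = c ∧ P x)).card =
      (Finset.univ.filter (fun x : L => T x ≠ 0 ∧ P x)).card := by
  have key : ∀ c' : Fq, c' ≠ 0 → (Finset.univ.filter (fun x : L => T x = c' ∧ P x)).card =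
      (Finset.univ.filter (fun x : L => T x = c ∧ P x)).card := by
    intro c' hc'
    have hco : (Nat.card Fqˣ).Coprime j := by
      rw [Nat.card_eq_fintype_card, Fintype.card_units]
      exact (Nat.coprime_comm.1 hj)
    obtain ⟨l, hl⟩ := (powCoprime hco).surjective (Units.mk0 (c / c') (div_ne_zero hc hc'))
    have hl' : (l : Fq) ^ j = c / c' := by
      have := congrArg Units.val hl
      simpa using this
    have hl0 : (algebraMap Fq L (l : Fq)) ≠ 0 := by simp
    refine Finset.card_bij (fun x _ => algebraMap Fq L (l : Fq) * x) ?_ ?_ ?_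
    · intro x hx
      simp only [Finset.mem_filter, Finset.mem_univ, true_and] at hx ⊢
      rw [hT, hP _ _ l.ne_zero, hl', hx.1]
      exact ⟨by field_simp, hx.2⟩
    · intro x _ y _ hxy
      exact mul_left_cancel₀ hl0 hxy
    · intro y hy
      simp only [Finset.mem_filter, Finset.mem_univ, true_and] at hy
      have hyy : algebraMap Fq L (l : Fq) * ((algebraMap Fq L (l : Fq))⁻¹ * y) = y := by
        field_simp
      refine ⟨(algebraMap Fq L (l : Fq))⁻¹ * y, ?_, hyy⟩
      simp only [Finset.mem_filter, Finset.mem_univ, true_and]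
      rw [← hP _ _ l.ne_zero, hyy]
      refine ⟨?_, hy.2⟩
      have h1 := hT l ((algebraMap Fq L (l : Fq))⁻¹ * y)
      rw [hyy, hy.1, hl'] at h1
      generalize T ((algebraMap Fq L (l : Fq))⁻¹ * y) = t at h1
      field_simp at h1
      exact h1.symm
  rw [Finset.card_eq_sum_card_fiberwise (s := Finset.univ.filter (fun x : L => T x ≠ 0 ∧ P x)) (f := T) (t := Finset.univ.filter (fun c' : Fq => c' ≠ 0))]
  · rw [Finset.sum_congr rfl (g := fun _ =>
      (Finset.univ.filter (fun x : L => T x = c ∧ P x)).card)]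
    · rw [Finset.sum_const, smul_eq_mul, Finset.filter_ne', Finset.card_erase_of_mem (by simp),
        Finset.card_univ]
    · intro c' hc'
      have hcz := (Finset.mem_filter.1 hc').2
      rw [← key c' hcz]
      congr 1
      ext x
      simp only [Finset.mem_filter, Finset.mem_univ, true_and]
      constructor
      · rintro ⟨⟨_, h⟩, h'⟩; exact ⟨h', h⟩
      · rintro ⟨h, h'⟩; exact ⟨⟨h ▸ hcz, h'⟩, h⟩
  · intro x hx
    simp at hx ⊢
    exact hx.1

open Classical in
theorem aux_main_s16 (e q m : ℕ) (he : 0 < e) (hq : q = 2 ^ e)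
    (hm : 0 < m) (hgcd : Nat.gcd (2 * m) (q - 1) = 1)
    (Fq Ff Fk : Type) [Field Fq] [Field Ff] [Field Fk]
    [Fintype Fq] [Fintype Ff] [Fintype Fk]
    [Algebra Fq Ff] [Algebra Ff Fk] [Algebra Fq Fk] [IsScalarTower Fq Ff Fk]
    (hcq : Fintype.card Fq = q) (hcf : Fintype.card Ff = q ^ 2)
    (hck : Fintype.card Fk = q ^ (4 * m))
    (hnorm : ∀ x : Fk,
      algebraMap Ff Fk (Algebra.norm Ff x) = x ^ ((q ^ (4 * m) - 1) / (q ^ 2 - 1)))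
    (a : Fq) (ha : a ≠ 0) :
    ∃ M : ℕ, (q + 1) * M + 1 = q ^ (4 * m) ∧
      (Finset.univ.filter (fun x : Fk => x ^ M = 1)).card = M ∧ M ≠ 0 ∧
      (Finset.univ.filter (fun x : Fk => Algebra.trace Fq Ff (Algebra.norm Ff x) + a = 0)).card
        * (q - 1) = q * M ∧
      ∀ b : Fk, b ≠ 0 →
        (q : ℤ) * (q + 1) * ((Finset.univ.filter (fun d : Fk =>
          Algebra.trace Fq Ff (Algebra.norm Ff d) + a = 0 ∧
            Algebra.trace Fq Fk (b * d) ≠ 0)).card : ℤ) = (q : ℤ) ^ (4 * m + 1) +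
          (if b ^ M = 1 then - (q : ℤ) ^ (2 * m + 1) else (q : ℤ) ^ (2 * m)) := by
  have hq2 : 2 ≤ q := by rw [hq]; exact Nat.le_self_pow he.ne' 2
  have hch : CharP Fq 2 := charP_of_card_eq_prime_pow (f := e) (by rw [hcq, hq])
  have hchk : CharP Fk 2 := charP_of_injective_algebraMap (algebraMap Fq Fk).injective 2
  set n := (q ^ (4 * m) - 1) / (q ^ 2 - 1) with hn
  have hdn : (q ^ 2 - 1) * n = q ^ (4 * m) - 1 := by
    apply Nat.mul_div_cancel'
    have := Nat.sub_dvd_pow_sub_pow (q ^ 2) 1 (2 * m)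
    rw [one_pow, ← pow_mul, show 2 * (2 * m) = 4 * m by ring] at this
    exact this
  have hqk : 2 ≤ q ^ (4 * m) := hq2.trans (Nat.le_self_pow (by omega) q)
  obtain ⟨M, hMn⟩ : ∃ M, M = (q - 1) * n := ⟨_, rfl⟩
  have hM1 : (q + 1) * M + 1 = q ^ (4 * m) := by
    have : (q + 1) * M = q ^ (4 * m) - 1 := by
      rw [← hdn, hMn, ← mul_assoc, show q ^ 2 - 1 = (q + 1) * (q - 1) from by
        simpa using Nat.sq_sub_sq q 1]
    omega
  have hM0 : M ≠ 0 := by rintro rfl; omega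
  have hckM : Fintype.card Fk = (q + 1) * M + 1 := by rw [hck, hM1]
  have hZ : (Finset.univ.filter (fun x : Fk => x ^ M = 1)).card = M := by
    have := aux_powsum (q + 1) M hM0 (by omega) hckM (fun _ => 1)
    simp only [Finset.sum_const, Finset.card_univ, nsmul_eq_mul, mul_one, hckM] at this
    have h2 : (q + 1) * M = (q + 1) * (Finset.univ.filter (fun x : Fk => x ^ M = 1)).card := by
      zify; push_cast at this; linarith
    exact (Nat.eq_of_mul_eq_mul_left (by omega) h2).symm
  obtain ⟨T, hTdef⟩ : ∃ T : Fk → Fq, ∀ x, T x = Algebra.trace Fq Ff (Algebra.norm Ff x) :=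
    ⟨_, fun _ => rfl⟩
  have hfr2 : Module.finrank Fq Ff = 2 := by
    have := Module.card_eq_pow_finrank (K := Fq) (V := Ff)
    rw [hcq, hcf] at this
    exact (Nat.pow_right_injective hq2 this).symm
  have hfrk : Module.finrank Fq Fk = 4 * m := by
    have := Module.card_eq_pow_finrank (K := Fq) (V := Fk)
    rw [hcq, hck] at this
    exact (Nat.pow_right_injective hq2 this).symm
  have hfr : Module.finrank Ff Fk = 2 * m := by
    have := Module.finrank_mul_finrank Fq Ff Fk
    rw [hfr2, hfrk] at this
    omega
  have hT : ∀ (l : Fq) (x : Fk), T (algebraMap Fq Fk l * x) = l ^ (2 * m) * T x := by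
    intro l x
    rw [hTdef, hTdef, map_mul, IsScalarTower.algebraMap_apply Fq Ff Fk, Algebra.norm_algebraMap,
      hfr, ← map_pow, ← Algebra.smul_def, map_smul, smul_eq_mul]
  have hTmap : ∀ x : Fk, algebraMap Fq Fk (T x) = x ^ n + x ^ (n * q) := by
    intro x
    rw [hTdef, IsScalarTower.algebraMap_apply Fq Ff Fk, FiniteField.algebraMap_trace_eq_sum_pow,
      hfr2, Nat.card_eq_fintype_card, hcq]
    simp only [Finset.sum_range_succ, Finset.sum_range_zero, pow_zero, pow_one, zero_add, map_add,
      map_pow, hnorm, ← pow_mul]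
  have hn0 : n ≠ 0 := by rintro h; rw [h] at hMn; simp at hMn; exact hM0 hMn
  have hT0 : ∀ x : Fk, T x = 0 ↔ x = 0 ∨ x ^ M = 1 := by
    intro x
    rw [← (algebraMap Fq Fk).injective.eq_iff, map_zero, hTmap, CharTwo.add_eq_zero]
    by_cases hx : x = 0
    · subst hx; simp [hn0, show q ≠ 0 by omega]
    · rw [or_iff_right hx, show n * q = M + n from by
        rw [hMn]; obtain ⟨r, rfl⟩ : ∃ r, q = r + 1 := ⟨q - 1, by omega⟩
        rw [Nat.add_sub_cancel]; ring, pow_add]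
      constructor
      · intro h
        have h0 : x ^ n ≠ 0 := pow_ne_zero _ hx
        exact mul_right_cancel₀ h0 (by rw [← h, one_mul])
      · intro h; rw [h, one_mul]
  have hTa : ∀ x : Fk, Algebra.trace Fq Ff (Algebra.norm Ff x) + a = 0 ↔ T x = -a := by
    intro x; rw [hTdef, add_eq_zero_iff_eq_neg]
  refine ⟨M, hM1, hZ, hM0, ?_, ?_⟩
  · have h1 := aux_scale_s16 (2 * m) (by rw [hcq]; exact hgcd) T hT (fun _ => True)
      (fun _ _ _ => Iff.rfl) (-a) (neg_ne_zero.2 ha)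
    simp only [and_true, hcq] at h1
    simp only [hTa]
    rw [mul_comm, h1]
    have h2 : (Finset.univ.filter (fun x : Fk => T x ≠ 0)).card +
        (Finset.univ.filter (fun x : Fk => T x = 0)).card = Fintype.card Fk := by
      rw [add_comm]
      exact Finset.card_filter_add_card_filter_not _
    have h3 : (Finset.univ.filter (fun x : Fk => T x = 0)) =
        insert 0 (Finset.univ.filter (fun x : Fk => x ^ M = 1)) := by
      ext x; simp [hT0]
    rw [h3, Finset.card_insert_of_notMem (by simp [hM0]), hZ, hckM] at h2
    have : (q + 1) * M = q * M + M := by ring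
    omega
  · intro b hb
    obtain ⟨ψ, hψ⟩ := aux_char (K := Fq)
    let χ : AddChar Fk ℤ := ψ.compAddMonoidHom (Algebra.trace Fq Fk).toAddMonoidHom
    have hχdef : ∀ x, χ x = ψ (Algebra.trace Fq Fk x) := fun _ => rfl
    have hχ : χ.IsPrimitive := by
      apply AddChar.IsPrimitive.of_ne_one
      intro h
      apply hψ (one_ne_zero)
      ext y
      obtain ⟨x, hx⟩ := Algebra.trace_surjective Fq Fk y
      have := DFunLike.congr_fun h x
      rw [hχdef, hx] at this
      simpa using this
    have hχq : ∀ x, χ (x ^ q) = χ x := by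
      intro x
      rw [hχdef, hχdef, ← Algebra.trace_eq_of_algEquiv
        (FiniteField.frobeniusAlgEquivOfAlgebraic Fq Fk) x,
        FiniteField.coe_frobeniusAlgEquivOfAlgebraic, hcq]
    have hχ1 : ∀ c : Fq, χ (algebraMap Fq Fk c) = 1 := by
      intro c
      rw [hχdef, Algebra.trace_algebraMap, hfrk, nsmul_eq_mul,
        show ((4 * m : ℕ) : Fq) = 0 from (CharP.cast_eq_zero_iff Fq 2 _).2 ⟨2 * m, by ring⟩]
      simp
    have hS := fun b hb => aux_S (Fq := Fq) (Ff := Ff) e q m M n he hq hcq hcf hck hM0 hckM hMn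
      χ hχ hχq hχ1 b hb
    have hE : ∀ b : Fk, ∑ x : Fk, χ (b * x ^ (q + 1)) = 1 + (q + 1) *
        ∑ z ∈ Finset.univ.filter (fun z : Fk => z ^ M = 1), χ (b * z) := by
      intro b
      rw [aux_powsum (q + 1) M hM0 (by omega) hckM (fun z => χ (b * z))]
      simp
    have hlM : ∀ l : Fq, l ≠ 0 → (algebraMap Fq Fk l * b) ^ M = b ^ M := by
      intro l hl
      rw [mul_pow, ← map_pow, hMn, pow_mul, ← hcq, FiniteField.pow_card_sub_one_eq_one l hl]
      simp
    have hw : (Fintype.card Fq - 1) * (Finset.univ.filter (fun x : Fk =>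
          T x = -a ∧ Algebra.trace Fq Fk (b * x) ≠ 0)).card =
        (Finset.univ.filter (fun x : Fk =>
          T x ≠ 0 ∧ Algebra.trace Fq Fk (b * x) ≠ 0)).card := by
      convert aux_scale_s16 (2 * m) (by rw [hcq]; exact hgcd) T hT
        (fun x => Algebra.trace Fq Fk (b * x) ≠ 0) (by
          intro l x hl
          rw [mul_left_comm, ← Algebra.smul_def, map_smul, smul_eq_mul]
          simp [hl]) (-a) (neg_ne_zero.2 ha)
    simp only [hTa]
    set w := (Finset.univ.filter (fun x : Fk => T x = -a ∧ Algebra.trace Fq Fk (b * x) ≠ 0)).card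
      with hwdef
    have hA := aux_count ψ hψ (Finset.univ : Finset Fk) b
    have hB := aux_count ψ hψ (Finset.univ.filter (fun z : Fk => z ^ M = 1)) b
    simp only [← hχdef, hcq] at hA hB
    set S : ℤ := if b ^ M = 1 then - (q : ℤ) ^ (2 * m + 1) else (q : ℤ) ^ (2 * m) with hSdef
    have hsumA : ∑ l : Fq, ∑ x : Fk, χ (algebraMap Fq Fk l * b * x) = (q : ℤ) ^ (4 * m) := by
      rw [Finset.sum_eq_single 0]
      · simp [hck]
      · intro l _ hl
        simp_rw [mul_comm _ (_ : Fk)]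
        have := AddChar.sum_mulShift (b * algebraMap Fq Fk l) hχ
        rw [if_neg (mul_ne_zero hb (by simpa using hl))] at this
        simpa using this
      · simp
    have hsumB : ((q : ℤ) + 1) * ∑ l : Fq, ∑ x ∈ Finset.univ.filter (fun z : Fk => z ^ M = 1),
        χ (algebraMap Fq Fk l * b * x) = (q + 1) * M + (q - 1) * (S - 1) := by
      rw [← Finset.add_sum_erase _ _ (Finset.mem_univ (0 : Fq)), mul_add,
        Finset.mul_sum (s := Finset.univ.erase (0 : Fq))]
      congr 1
      · simp [hZ, mul_comm]
      · rw [Finset.sum_congr rfl (g := fun _ => S - 1)]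
        · rw [Finset.sum_const, Finset.card_erase_of_mem (Finset.mem_univ _), Finset.card_univ, hcq,
            nsmul_eq_mul]
          push_cast [show 1 ≤ q by omega]
          ring
        · intro l hl
          have hl0 := (Finset.mem_erase.1 hl).1
          have h1 := hE (algebraMap Fq Fk l * b)
          rw [hS _ (mul_ne_zero (by simpa using hl0) hb), hlM l hl0] at h1
          rw [hSdef, h1]; ring
    have hsplit : (Finset.univ.filter (fun x : Fk => T x ≠ 0 ∧
          Algebra.trace Fq Fk (b * x) ≠ 0)).card +
        ((Finset.univ.filter (fun z : Fk => z ^ M = 1)).filter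
          (fun x => Algebra.trace Fq Fk (b * x) ≠ 0)).card =
        (Finset.univ.filter (fun x : Fk => Algebra.trace Fq Fk (b * x) ≠ 0)).card := by
      rw [← Finset.card_filter_add_card_filter_not
        (s := Finset.univ.filter (fun x : Fk => Algebra.trace Fq Fk (b * x) ≠ 0))
        (fun x => T x ≠ 0), Finset.filter_filter, Finset.filter_filter, Finset.filter_filter]
      congr 2
      · ext x; simp [and_comm]
      · ext x
        simp only [Finset.mem_filter, Finset.mem_univ, true_and, not_not, hT0]
        constructor
        · rintro ⟨h, h'⟩; exact ⟨h', Or.inr h⟩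
        · rintro ⟨h', h | h⟩
          · subst h; simp at h'
          · exact ⟨h, h'⟩
    rw [hsumA, Finset.card_univ, hck] at hA
    rw [hZ] at hB
    rw [← hw, hcq] at hsplit
    zify [show 1 ≤ q by omega] at hsplit hM1
    push_cast at hA
    have hq1 : ((q : ℤ) - 1) ≠ 0 := by have : (2 : ℤ) ≤ q := by exact_mod_cast hq2
                                       omega
    apply mul_left_cancel₀ hq1
    linear_combination (q * (q + 1) : ℤ) * hsplit + ((q : ℤ) + 1) * hA - ((q : ℤ) + 1) * hB + hsumB + (1 - q : ℤ) * hM1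

theorem stmt16 (p e q k : ℕ) [Fact p.Prime] (he : 0 < e) (hq : q = p ^ e)
    (hk : 0 < k) (hk4 : k % 4 = 0) (hgcd : Nat.gcd (k / 2) (q - 1) = 1)
    (Fq Ff Fk : Type) [Field Fq] [Field Ff] [Field Fk]
    [Fintype Fq] [Fintype Ff] [Fintype Fk]
    [Algebra Fq Ff] [Algebra Ff Fk] [Algebra Fq Fk] [IsScalarTower Fq Ff Fk]
    (hcq : Fintype.card Fq = q) (hcf : Fintype.card Ff = q ^ 2)
    (hck : Fintype.card Fk = q ^ k)
    (hnorm : ∀ x : Fk,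
      algebraMap Ff Fk (Algebra.norm Ff x) = x ^ ((q ^ k - 1) / (q ^ 2 - 1)))
    (a : Fq) (ha : a ≠ 0) :
    (Nat.card {b : Fk // b ≠ 0 ∧
        (Nat.card {d : Fk // Algebra.trace Fq Ff (Algebra.norm Ff d) + a = 0 ∧
            Algebra.trace Fq Fk (b * d) ≠ 0} : ℚ)
          = ((q : ℚ) ^ k - (q : ℚ) ^ (k / 2)) / ((q : ℚ) + 1)} : ℚ)
      = ((q : ℚ) ^ k - 1) / ((q : ℚ) + 1) ∧
    (Nat.card {b : Fk // b ≠ 0 ∧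
        (Nat.card {d : Fk // Algebra.trace Fq Ff (Algebra.norm Ff d) + a = 0 ∧
            Algebra.trace Fq Fk (b * d) ≠ 0} : ℚ)
          = ((q : ℚ) ^ k + (q : ℚ) ^ (k / 2 - 1)) / ((q : ℚ) + 1)} : ℚ)
      = (q : ℚ) * ((q : ℚ) ^ k - 1) / ((q : ℚ) + 1) ∧
    (∀ b : Fk, b ≠ 0 →
      (Nat.card {d : Fk // Algebra.trace Fq Ff (Algebra.norm Ff d) + a = 0 ∧
          Algebra.trace Fq Fk (b * d) ≠ 0} : ℚ)
          = ((q : ℚ) ^ k - (q : ℚ) ^ (k / 2)) / ((q : ℚ) + 1) ∨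
      (Nat.card {d : Fk // Algebra.trace Fq Ff (Algebra.norm Ff d) + a = 0 ∧
          Algebra.trace Fq Fk (b * d) ≠ 0} : ℚ)
          = ((q : ℚ) ^ k + (q : ℚ) ^ (k / 2 - 1)) / ((q : ℚ) + 1)) ∧
    (Nat.card {x : Fk // Algebra.trace Fq Ff (Algebra.norm Ff x) + a = 0} : ℚ)
      = (q : ℚ) * ((q : ℚ) ^ k - 1) / ((q : ℚ) ^ 2 - 1) ∧
    Function.Injective
      (fun (b : Fk)
          (d : {x : Fk // Algebra.trace Fq Ff (Algebra.norm Ff x) + a = 0}) =>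
        Algebra.trace Fq Fk (b * (d : Fk))) ∧
    (∀ b : Fk, b ≠ 0 →
      ((q : ℚ) ^ k - (q : ℚ) ^ (k / 2)) / ((q : ℚ) + 1)
        ≤ (Nat.card {d : Fk // Algebra.trace Fq Ff (Algebra.norm Ff d) + a = 0 ∧
            Algebra.trace Fq Fk (b * d) ≠ 0} : ℚ)) := by
  classical
  obtain ⟨m, rfl⟩ : ∃ m, k = 4 * m := ⟨k / 4, by omega⟩
  have hk2 : 4 * m / 2 = 2 * m := by omega
  rw [hk2] at hgcd ⊢
  have hp2 : p = 2 := by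
    rcases (Fact.out : p.Prime).eq_two_or_odd' with h | h
    · exact h
    · exfalso
      have h1 : Odd q := by rw [hq]; exact h.pow
      have h2 : 2 ∣ q - 1 := by obtain ⟨t, ht⟩ := h1; exact ⟨t, by omega⟩
      have h3 := Nat.dvd_gcd (Nat.dvd_mul_right 2 m) h2
      rw [hgcd] at h3
      omega
  subst hp2
  have hm : 0 < m := by omega
  have hq2 : 2 ≤ q := by rw [hq]; exact Nat.le_self_pow he.ne' 2
  obtain ⟨M, hM1, hZ, hM0, hlen, hw⟩ := aux_main_s16 e q m he hq hm hgcd Fq Ff Fk hcq hcf hck hnorm a ha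
  have hq2' : (2 : ℚ) ≤ q := by exact_mod_cast hq2
  have hM1' : ((q : ℚ) + 1) * M + 1 = (q : ℚ) ^ (4 * m) := by exact_mod_cast hM1
  have hlen' : ((Finset.univ.filter (fun x : Fk =>
      Algebra.trace Fq Ff (Algebra.norm Ff x) + a = 0)).card : ℚ) * (q - 1) = q * M := by
    have : ((q - 1 : ℕ) : ℚ) = (q : ℚ) - 1 := by push_cast [show 1 ≤ q by omega]; ring
    rw [← this]; exact_mod_cast hlen
  have hpos : (0 : ℚ) < q := by linarith
  have hpow1 : (q : ℚ) * (q : ℚ) ^ (2 * m - 1) = (q : ℚ) ^ (2 * m) := by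
    rw [← pow_succ']; congr 1; omega
  have hpp : (0 : ℚ) < (q : ℚ) ^ (2 * m - 1) := by positivity
  have hpp2 : (0 : ℚ) < (q : ℚ) ^ (2 * m) := by positivity
  -- the weight of each nonzero codeword
  have hwt : ∀ b : Fk, b ≠ 0 →
      (Nat.card {d : Fk // Algebra.trace Fq Ff (Algebra.norm Ff d) + a = 0 ∧
          Algebra.trace Fq Fk (b * d) ≠ 0} : ℚ) =
        if b ^ M = 1 then ((q : ℚ) ^ (4 * m) - (q : ℚ) ^ (2 * m)) / ((q : ℚ) + 1)
        else ((q : ℚ) ^ (4 * m) + (q : ℚ) ^ (2 * m - 1)) / ((q : ℚ) + 1) := by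
    intro b hb
    have h1 := hw b hb
    rw [Nat.card_eq_fintype_card, Fintype.card_subtype]
    have h2 := congrArg (Int.cast : ℤ → ℚ) h1
    have hq1 : ((q : ℚ) + 1) ≠ 0 := by positivity
    split_ifs at h2 ⊢ with hbM
    · push_cast at h2
      rw [eq_div_iff hq1]
      apply mul_left_cancel₀ hpos.ne'
      rw [pow_succ, pow_succ] at h2
      linear_combination h2
    · push_cast at h2
      rw [eq_div_iff hq1]
      apply mul_left_cancel₀ hpos.ne'
      rw [pow_succ] at h2
      linear_combination h2 - hpow1
  have hlt : ((q : ℚ) ^ (4 * m) - (q : ℚ) ^ (2 * m)) / ((q : ℚ) + 1) <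
      ((q : ℚ) ^ (4 * m) + (q : ℚ) ^ (2 * m - 1)) / ((q : ℚ) + 1) := by
    apply div_lt_div_of_pos_right _ (by linarith)
    linarith
  have hwpos : 0 < ((q : ℚ) ^ (4 * m) - (q : ℚ) ^ (2 * m)) / ((q : ℚ) + 1) := by
    apply div_pos _ (by linarith)
    have := pow_lt_pow_right₀ (show (1 : ℚ) < q by linarith) (show 2 * m < 4 * m by omega)
    linarith
  have hmin : ∀ b : Fk, b ≠ 0 →
      ((q : ℚ) ^ (4 * m) - (q : ℚ) ^ (2 * m)) / ((q : ℚ) + 1)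
        ≤ (Nat.card {d : Fk // Algebra.trace Fq Ff (Algebra.norm Ff d) + a = 0 ∧
            Algebra.trace Fq Fk (b * d) ≠ 0} : ℚ) := by
    intro b hb
    rw [hwt b hb]
    split_ifs
    · exact le_rfl
    · exact hlt.le
  have hz0 : ∀ b : Fk, b ^ M = 1 → b ≠ 0 := by
    rintro b h rfl
    simp [hM0] at h
  refine ⟨?_, ?_, ?_, ?_, ?_, hmin⟩
  · have : Nat.card {b : Fk // b ≠ 0 ∧
        (Nat.card {d : Fk // Algebra.trace Fq Ff (Algebra.norm Ff d) + a = 0 ∧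
            Algebra.trace Fq Fk (b * d) ≠ 0} : ℚ)
          = ((q : ℚ) ^ (4 * m) - (q : ℚ) ^ (2 * m)) / ((q : ℚ) + 1)} = M := by
      rw [← hZ, Nat.card_eq_fintype_card, Fintype.card_subtype]
      congr 1
      ext b
      simp only [Finset.mem_filter, Finset.mem_univ, true_and]
      constructor
      · rintro ⟨hb, h⟩
        rw [hwt b hb] at h
        by_contra hbM
        rw [if_neg hbM] at h
        exact hlt.ne' h
      · intro h
        refine ⟨hz0 b h, ?_⟩
        rw [hwt b (hz0 b h), if_pos h]
    rw [this, eq_div_iff (by linarith)]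
    linear_combination hM1'
  · have : Nat.card {b : Fk // b ≠ 0 ∧
        (Nat.card {d : Fk // Algebra.trace Fq Ff (Algebra.norm Ff d) + a = 0 ∧
            Algebra.trace Fq Fk (b * d) ≠ 0} : ℚ)
          = ((q : ℚ) ^ (4 * m) + (q : ℚ) ^ (2 * m - 1)) / ((q : ℚ) + 1)} = q * M := by
      have h1 : (Finset.univ.filter (fun b : Fk => b ≠ 0 ∧
        (Nat.card {d : Fk // Algebra.trace Fq Ff (Algebra.norm Ff d) + a = 0 ∧
            Algebra.trace Fq Fk (b * d) ≠ 0} : ℚ)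
          = ((q : ℚ) ^ (4 * m) + (q : ℚ) ^ (2 * m - 1)) / ((q : ℚ) + 1))) =
          (insert 0 (Finset.univ.filter (fun x : Fk => x ^ M = 1)))ᶜ := by
        ext b
        simp only [Finset.mem_filter, Finset.mem_univ, true_and, Finset.mem_compl,
          Finset.mem_insert, not_or]
        refine and_congr_right fun hb => ?_
        rw [hwt b hb]
        constructor
        · intro h hbM
          rw [if_pos hbM] at h
          exact hlt.ne h
        · intro h
          rw [if_neg h]
      rw [Nat.card_eq_fintype_card, Fintype.card_subtype, h1, Finset.card_compl,
        Finset.card_insert_of_notMem (by simp [hM0]), hZ, hck, ← hM1]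
      have : (q + 1) * M = q * M + M := by ring
      omega
    rw [this, eq_div_iff (by linarith)]
    push_cast
    linear_combination (q : ℚ) * hM1'
  · intro b hb
    rw [hwt b hb]
    split_ifs
    · exact Or.inl rfl
    · exact Or.inr rfl
  · rw [Nat.card_eq_fintype_card, Fintype.card_subtype, eq_div_iff (by nlinarith)]
    linear_combination ((q : ℚ) + 1) * hlen' + (q : ℚ) * hM1'
  · intro b b' hbb
    by_contra hne
    have h1 := hmin (b - b') (sub_ne_zero.2 hne)
    have h2 : IsEmpty {d : Fk // Algebra.trace Fq Ff (Algebra.norm Ff d) + a = 0 ∧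
            Algebra.trace Fq Fk ((b - b') * d) ≠ 0} := by
      constructor
      rintro ⟨d, hd, hd'⟩
      apply hd'
      have := congrFun hbb ⟨d, hd⟩
      simp only at this
      rw [sub_mul, map_sub, this, sub_self]
    rw [Nat.card_of_isEmpty] at h1
    push_cast at h1
    linarith
end
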